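/- Let Z_1, …, Z_{N−1+M} be independent real-valued random variables, each with the same atomless Borel probability law, and fix integers k, with 1 ≤ k ≤ N − 1 and 1 ≤ k ≤ M. Let R denote the k-th smallest element of the multiset {Z_1, …, Z_{N−1}}, and let C = #{j ∈ {1, …, M} : Z_{N−1+j} ≤ R}. Then E[min(C / k, 1)] = ∑_{j=1}^M min(j/k, 1) · C(M, j) · B(k + j, M − j + N − k) / B(k, N − k), where C(M, j) is the binomial coefficient and B is the Beta function. -/

import Mathlib

/-!
Only exchangeability and almost sure distinctness of the sample are needed. By exchangeability, the
probability that the observations below the `i`-th one are exactly those indexed by `U ∌ i` depends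
only on the cardinality `u` of `U`. Almost surely exactly one observation has exactly `u` others
below it, so this probability is `1 / (n * (n - 1).choose u) = B(u + 1, n - u)`, where `n` is the
size of the sample. Almost surely exactly one reference observation has rank `k` among the
references; summing over this observation and over the sets `U` of `k - 1` references and `j` test
observations below it shows that the count is beta-binomial.
-/

open MeasureTheory ProbabilityTheory Finset

/-- The `k`-th smallest element of a multiset of real numbers
(the `k`-th entry of the multiset sorted in nondecreasing order). -/
noncomputable def kthSmallest (s : Multiset ℝ) (k : ℕ) : ℝ :=
  (Multiset.sort s (· ≤ ·)).getD (k - 1) 0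

/-- The Beta function `B(x, y) = ∫₀¹ t^(x-1) (1-t)^(y-1) dt`. -/
noncomputable def Beta (x y : ℝ) : ℝ :=
  ∫ t in (0:ℝ)..1, t ^ (x - 1) * (1 - t) ^ (y - 1)

section Beta

lemma Beta_eq_beta {x y : ℝ} (hx : 0 < x) (hy : 0 < y) : Beta x y = ProbabilityTheory.beta x y := by
  have hBeta : (Beta x y : ℂ) = Complex.betaIntegral x y := by
    rw [Beta, Complex.betaIntegral, ← intervalIntegral.integral_ofReal]
    refine intervalIntegral.integral_congr fun t ht => ?_
    rw [Set.uIcc_of_le zero_le_one] at ht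
    simp [Complex.ofReal_cpow ht.1, Complex.ofReal_cpow (sub_nonneg.2 ht.2)]
  rw [beta_eq_betaIntegralReal x y hx hy, ← hBeta, Complex.ofReal_re]

lemma Beta_natCast_add_one_natCast_sub {n u : ℕ} (hu : u < n) :
    Beta ((u : ℝ) + 1) ((n : ℝ) - u) = ((n : ℝ) * ((n - 1).choose u : ℝ))⁻¹ := by
  obtain ⟨v, rfl⟩ := Nat.exists_eq_add_of_lt hu
  have hsub : ((u + v + 1 : ℕ) : ℝ) - u = v + 1 := by push_cast; ring
  have hadd : (u : ℝ) + 1 + (v + 1) = (u + v + 1 : ℕ) + 1 := by push_cast; ring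
  rw [hsub, Beta_eq_beta (by positivity) (by positivity), ProbabilityTheory.beta, hadd]
  simp only [Real.Gamma_nat_eq_factorial, Nat.add_sub_cancel, Nat.cast_add_choose,
    Nat.factorial_succ, Nat.cast_mul]
  field_simp

end Beta

section KthSmallest

lemma le_getElem_iff_countP_lt_le {α : Type*} [LinearOrder α] {l : List α}
    (hl : l.Pairwise (· ≤ ·)) {m : ℕ} (hm : m < l.length) {a : α} :
    a ≤ l[m] ↔ l.countP (· < a) ≤ m := by
  have hmono : ∀ {p q : ℕ} (hq : q < l.length) (hpq : p ≤ q), l[p] ≤ l[q] := fun hq hpq =>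
    hl.sortedLE.getElem_le_getElem_of_le hpq
  constructor
  · intro ha
    have hdrop : (l.drop m).countP (· < a) = 0 := by
      rw [List.countP_eq_zero]
      intro b hb
      obtain ⟨p, hp, rfl⟩ := List.getElem_of_mem hb
      rw [List.length_drop] at hp
      simpa using ha.trans (hmono (by omega) (Nat.le_add_right m p))
    calc l.countP (· < a)
        = (l.take m).countP (· < a) + (l.drop m).countP (· < a) := by
          rw [← List.countP_append, List.take_append_drop]
      _ ≤ m := by
          rw [hdrop, add_zero]
          exact List.countP_le_length.trans (List.length_take_le m l)
  · contrapose!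
    intro ha
    have htake : (l.take (m + 1)).countP (· < a) = m + 1 := by
      rw [List.countP_eq_length.2, List.length_take_of_le hm]
      intro b hb
      obtain ⟨p, hp, rfl⟩ := List.getElem_of_mem hb
      rw [List.length_take] at hp
      simpa using (hmono hm (by omega)).trans_lt ha
    calc m + 1 = (l.take (m + 1)).countP (· < a) := htake.symm
      _ ≤ l.countP (· < a) := (List.take_sublist _ _).countP_le

lemma le_kthSmallest_iff {s : Multiset ℝ} {k : ℕ} (hk : 1 ≤ k) (hks : k ≤ s.card) {a : ℝ} :
    a ≤ kthSmallest s k ↔ s.countP (· < a) < k := by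
  have hlt : k - 1 < (s.sort (· ≤ ·)).length := by rw [Multiset.length_sort]; omega
  have hcount : s.countP (· < a) = (s.sort (· ≤ ·)).countP (· < a) := by
    rw [← Multiset.coe_countP, Multiset.sort_eq]
  rw [kthSmallest, List.getD_eq_getElem _ _ hlt,
    le_getElem_iff_countP_lt_le (Multiset.pairwise_sort _ _) hlt, hcount]
  omega

end KthSmallest

section BelowSet

/-- The indices of the observations strictly below the `i`-th one; its cardinality is the
zero-based rank of `x i`. -/
def belowSet {ι α : Type*} [Fintype ι] [LinearOrder α] (x : ι → α) (i : ι) : Finset ι :=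
  {l | x l < x i}

variable {ι κ α : Type*} [Fintype ι] [Fintype κ] [LinearOrder α]

@[simp]
lemma mem_belowSet {x : ι → α} {i l : ι} : l ∈ belowSet x i ↔ x l < x i := by
  simp [belowSet]

lemma notMem_belowSet (x : ι → α) (i : ι) : i ∉ belowSet x i := by
  simp

lemma card_belowSet_lt_card (x : ι → α) (i : ι) : #(belowSet x i) < Fintype.card ι :=
  Finset.card_lt_univ_of_notMem (notMem_belowSet x i)

lemma belowSet_ssubset_belowSet {x : ι → α} {i j : ι} (hij : x i < x j) :
    belowSet x i ⊂ belowSet x j :=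
  (Finset.ssubset_iff_of_subset fun _ hl => mem_belowSet.2 ((mem_belowSet.1 hl).trans hij)).2
    ⟨i, mem_belowSet.2 hij, notMem_belowSet x i⟩

lemma card_belowSet_injective {x : ι → α} (hx : Function.Injective x) :
    Function.Injective fun i => #(belowSet x i) := by
  intro i j hcard
  rcases lt_trichotomy (x i) (x j) with hlt | heq | hgt
  · exact absurd hcard (Finset.card_lt_card (belowSet_ssubset_belowSet hlt)).ne
  · exact hx heq
  · exact absurd hcard (Finset.card_lt_card (belowSet_ssubset_belowSet hgt)).ne'

lemma existsUnique_card_belowSet_eq {x : ι → α} (hx : Function.Injective x) {u : ℕ}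
    (hu : u < Fintype.card ι) : ∃! i, #(belowSet x i) = u := by
  let rank : ι → Fin (Fintype.card ι) := fun i => ⟨#(belowSet x i), card_belowSet_lt_card x i⟩
  have hrank : Function.Bijective rank := by
    rw [Fintype.bijective_iff_injective_and_card]
    exact ⟨fun i j hij => card_belowSet_injective hx (Fin.val_eq_of_eq hij), by simp⟩
  simpa [rank, Fin.ext_iff] using hrank.existsUnique ⟨u, hu⟩

lemma map_belowSet_comp (x : κ → α) (σ : ι ≃ κ) (i : ι) :
    (belowSet (x ∘ σ) i).map σ.toEmbedding = belowSet x (σ i) := by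
  ext l
  simp [Finset.mem_map_equiv]

lemma toLeft_belowSet_inl (x : ι ⊕ κ → α) (i : ι) :
    (belowSet x (Sum.inl i)).toLeft = belowSet (x ∘ Sum.inl) i := by
  ext l
  simp

lemma countP_map_univ_val_lt (x : ι → α) (a : α) :
    (Finset.univ.val.map x).countP (· < a) = #{i | x i < a} := by
  rw [Multiset.countP_map]
  rfl

lemma kthSmallest_card_belowSet_add_one (x : ι → ℝ) (i : ι) :
    kthSmallest (Finset.univ.val.map x) (#(belowSet x i) + 1) = x i := by
  have hle_iff : ∀ a, a ≤ kthSmallest (Finset.univ.val.map x) (#(belowSet x i) + 1) ↔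
      #{l | x l < a} < #(belowSet x i) + 1 := fun a => by
    rw [le_kthSmallest_iff (Nat.le_add_left 1 _) (by simpa using card_belowSet_lt_card x i),
      countP_map_univ_val_lt]
  refine le_antisymm (le_of_not_gt fun hlt => ?_) ((hle_iff _).2 (Nat.lt_succ_self _))
  refine ((hle_iff _).1 le_rfl).not_ge (Finset.card_lt_card ?_)
  refine (Finset.ssubset_iff_of_subset fun l hl => ?_).2 ⟨i, by simpa using hlt, by simp⟩
  simpa using (mem_belowSet.1 hl).trans hlt

/-- The count `C` of the theorem: for a sample `x` made of references (left summand) and test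
observations (right summand), the number of the latter that do not exceed the `k`-th smallest
reference. -/
noncomputable def countLeKthSmallest (k : ℕ) (x : ι ⊕ κ → ℝ) : ℕ :=
  #{j | x (Sum.inr j) ≤ kthSmallest (Finset.univ.val.map (x ∘ Sum.inl)) k}

lemma countLeKthSmallest_le_card (k : ℕ) (x : ι ⊕ κ → ℝ) :
    countLeKthSmallest k x ≤ Fintype.card κ :=
  Finset.card_le_univ _

lemma countLeKthSmallest_eq_card_toRight {x : ι ⊕ κ → ℝ} (hx : Function.Injective x) {u : ℕ}
    {i : ι} (hi : #(belowSet (x ∘ Sum.inl) i) = u) :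
    countLeKthSmallest (u + 1) x = #(belowSet x (Sum.inl i)).toRight := by
  rw [countLeKthSmallest, ← hi, kthSmallest_card_belowSet_add_one]
  congr 1
  ext j
  simp [le_iff_lt_or_eq, hx.eq_iff]

lemma countLeKthSmallest_eq_card_filter {k : ℕ} (hk : 1 ≤ k) (hkι : k ≤ Fintype.card ι)
    (x : ι ⊕ κ → ℝ) :
    countLeKthSmallest k x = #{j | #(belowSet x (Sum.inr j)).toLeft < k} := by
  unfold countLeKthSmallest
  congr! 3 with j
  rw [le_kthSmallest_iff hk (by simpa using hkι), countP_map_univ_val_lt]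
  congr! 2
  ext i
  simp

end BelowSet

lemma exists_perm_apply_eq_and_map_eq {ι : Type*} [Finite ι] {i j : ι} {U V : Finset ι}
    (hi : i ∉ U) (hj : j ∉ V) (hcard : #U = #V) :
    ∃ σ : Equiv.Perm ι, σ i = j ∧ U.map σ.toEmbedding = V := by
  classical
  cases nonempty_fintype ι
  let e : Equiv.Perm ι := (Finset.equivOfCardEq hcard).extendSubtype
  have hei : e i ∉ V := Equiv.extendSubtype_not_mem _ i hi
  refine ⟨e.trans (Equiv.swap (e i) j), by simp,
    Finset.eq_of_subset_of_card_le ?_ (by simp [hcard])⟩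
  intro l hl
  obtain ⟨l, hlU, rfl⟩ := Finset.mem_map.1 hl
  have hel : e l ∈ V := Equiv.extendSubtype_mem _ l hlU
  have hswap : Equiv.swap (e i) j (e l) = e l :=
    Equiv.swap_apply_of_ne_of_ne (ne_of_mem_of_not_mem hel hei) (ne_of_mem_of_not_mem hel hj)
  simpa [hswap] using hel

section AlmostSure

variable {Ω : Type*} [MeasurableSpace Ω] {P : Measure Ω}

lemma sum_measureReal_inter_of_ae_existsUnique {ι : Type*} [Fintype ι] [IsFiniteMeasure P]
    {B : ι → Set Ω} (hB : ∀ i, MeasurableSet (B i)) (hunique : ∀ᵐ ω ∂P, ∃! i, ω ∈ B i)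
    (E : Set Ω) : ∑ i, P.real (E ∩ B i) = P.real E := by
  have hdisj : Pairwise (Function.onFun (AEDisjoint P) B) := fun i j hij =>
    measure_eq_zero_iff_ae_notMem.2 <| hunique.mono fun ω hω hmem =>
      hij (hω.unique hmem.1 hmem.2)
  have hcover : ∀ᵐ ω ∂P, ω ∈ ⋃ i, B i := hunique.mono fun ω hω => Set.mem_iUnion.2 hω.exists
  have hsum : P = Measure.sum fun i => P.restrict (B i) := by
    rw [← Measure.restrict_iUnion_ae hdisj fun i => (hB i).nullMeasurableSet,
      Measure.restrict_eq_self_of_ae_mem hcover]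
  have hE : P E = ∑ i, P (E ∩ B i) := by
    conv_lhs => rw [hsum]
    simp [Measure.restrict_apply' (hB _)]
  rw [measureReal_def, hE, ENNReal.toReal_sum fun i _ => measure_ne_top P _]
  rfl

lemma integral_comp_eq_sum_range {E : Type*} [NormedAddCommGroup E] [NormedSpace ℝ E]
    [CompleteSpace E] [IsFiniteMeasure P] {C : Ω → ℕ} (hC : Measurable C) {m : ℕ}
    (hCm : ∀ ω, C ω ≤ m) (g : ℕ → E) :
    ∫ ω, g (C ω) ∂P = ∑ j ∈ Finset.range (m + 1), P.real {ω | C ω = j} • g j := by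
  have hmem : ∀ᵐ j ∂P.map C, j ∈ (Finset.range (m + 1) : Set ℕ) := by
    rw [ae_map_iff hC.aemeasurable .of_discrete]
    exact .of_forall fun ω => by simpa [Nat.lt_succ_iff] using hCm ω
  rw [← integral_map hC.aemeasurable (.of_discrete (f := g)),
    ← Measure.restrict_eq_self_of_ae_mem hmem, setIntegral_finset _ .finset]
  refine Finset.sum_congr rfl fun j _ => ?_
  rw [map_measureReal_apply hC (.singleton j)]
  rfl

lemma ae_ne_of_indepFun {α : Type*} [MeasurableSpace α] [MeasurableEq α] [IsFiniteMeasure P]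
    {X Y : Ω → α} (hX : Measurable X) (hY : Measurable Y) (hXY : IndepFun X Y P)
    [NullSingletonClass (P.map Y)] : ∀ᵐ ω ∂P, X ω ≠ Y ω := by
  have hdiag : (P.map X).prod (P.map Y) (Set.diagonal α) = 0 := by
    rw [Measure.measure_prod_null measurableSet_diagonal]
    refine .of_forall fun a => ?_
    have hslice : Prod.mk a ⁻¹' Set.diagonal α = {a} := by
      ext b
      simp [eq_comm]
    simp [hslice]
  rw [← hXY.map_prod_eq_prod_map_map hX.aemeasurable hY.aemeasurable,
    Measure.map_apply (hX.prodMk hY) measurableSet_diagonal] at hdiag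
  simpa [ae_iff, Set.preimage, Set.mem_diagonal_iff] using hdiag

lemma ae_injective_of_iIndepFun {ι α : Type*} [Countable ι] [MeasurableSpace α] [MeasurableEq α]
    [IsFiniteMeasure P] {Z : ι → Ω → α} (hZ : ∀ i, Measurable (Z i)) (hindep : iIndepFun Z P)
    [∀ i, NullSingletonClass (P.map (Z i))] : ∀ᵐ ω ∂P, Function.Injective fun i => Z i ω := by
  have hne : ∀ᵐ ω ∂P, ∀ i j, i ≠ j → Z i ω ≠ Z j ω := by
    simp only [ae_all_iff]
    exact fun i j hij => ae_ne_of_indepFun (hZ i) (hZ j) (hindep.indepFun hij)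
  exact hne.mono fun ω hω i j hij => not_imp_not.1 (hω i j) hij

end AlmostSure

section Exchangeable

/-- Exchangeability of a finite family of random variables: permuting the family does not change
its joint law. As `Measure.map` is `0` on functions that are not a.e. measurable, this is meant for
measurable families. -/
def Exchangeable {Ω ι α : Type*} [MeasurableSpace Ω] [MeasurableSpace α] (Z : ι → Ω → α)
    (P : Measure Ω) : Prop :=
  ∀ σ : Equiv.Perm ι, P.map (fun ω i => Z (σ i) ω) = P.map fun ω i => Z i ω

variable {Ω ι α : Type*} [MeasurableSpace Ω] {P : Measure Ω} [MeasurableSpace α]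

lemma exchangeable_of_iIndepFun [Finite ι] {Z : ι → Ω → α} {μ : Measure α}
    (hZ : ∀ i, Measurable (Z i)) (hlaw : ∀ i, P.map (Z i) = μ) (hindep : iIndepFun Z P) :
    Exchangeable Z P := by
  intro σ
  cases nonempty_fintype ι
  rw [(hindep.precomp σ.injective).map_fun_eq_pi_map fun i => (hZ (σ i)).aemeasurable,
    hindep.map_fun_eq_pi_map fun i => (hZ i).aemeasurable]
  simp only [hlaw]

variable [Fintype ι] [LinearOrder α] [TopologicalSpace α] [OrderClosedTopology α]
  [SecondCountableTopology α] [OpensMeasurableSpace α] {Z : ι → Ω → α}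

lemma measurableSet_setOf_belowSet (hZ : ∀ i, Measurable (Z i)) (i : ι) (p : Finset ι → Prop) :
    MeasurableSet {ω | p (belowSet (fun l => Z l ω) i)} := by
  have hsingleton : ∀ U, MeasurableSet {ω | belowSet (fun l => Z l ω) i = U} := fun U => by
    simp only [Finset.ext_iff, mem_belowSet, Set.ofPred_forall]
    exact .iInter fun l => (measurableSet_lt (hZ l) (hZ i)).iff (.const _)
  have hunion : {ω | p (belowSet (fun l => Z l ω) i)} =
      ⋃ U ∈ {U | p U}, {ω | belowSet (fun l => Z l ω) i = U} := by
    ext ω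
    simp
  rw [hunion]
  exact .biUnion (Set.to_countable _) fun U _ => hsingleton U

namespace Exchangeable

lemma measureReal_belowSet_eq_of_card_eq (hexch : Exchangeable Z P) (hZ : ∀ i, Measurable (Z i))
    {i j : ι} {U V : Finset ι} (hi : i ∉ U) (hj : j ∉ V) (hcard : #U = #V) :
    P.real {ω | belowSet (fun l => Z l ω) i = U} =
      P.real {ω | belowSet (fun l => Z l ω) j = V} := by
  obtain ⟨σ, rfl, rfl⟩ := exists_perm_apply_eq_and_map_eq hi hj hcard
  have hmeas : MeasurableSet {x : ι → α | belowSet x i = U} :=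
    measurableSet_setOf_belowSet measurable_pi_apply i (· = U)
  have hperm : {ω | belowSet (fun l => Z l ω) (σ i) = U.map σ.toEmbedding} =
      (fun ω l => Z (σ l) ω) ⁻¹' {x | belowSet x i = U} := by
    ext ω
    rw [Set.mem_ofPred_eq, ← map_belowSet_comp, Finset.map_inj]
    rfl
  rw [hperm, ← map_measureReal_apply (measurable_pi_lambda _ fun l => hZ (σ l)) hmeas, hexch σ,
    map_measureReal_apply (measurable_pi_lambda _ hZ) hmeas]
  rfl

lemma measureReal_belowSet_eq [IsProbabilityMeasure P] (hexch : Exchangeable Z P)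
    (hZ : ∀ i, Measurable (Z i)) (hdist : ∀ᵐ ω ∂P, Function.Injective fun i => Z i ω)
    {i : ι} {U : Finset ι} (hi : i ∉ U) :
    P.real {ω | belowSet (fun l => Z l ω) i = U} =
      Beta ((#U : ℝ) + 1) ((Fintype.card ι : ℝ) - #U) := by
  classical
  set p := P.real {ω | belowSet (fun l => Z l ω) i = U}
  have hU : #U < Fintype.card ι := Finset.card_lt_univ_of_notMem hi
  have hrank : ∀ j, P.real {ω | #(belowSet (fun l => Z l ω) j) = #U} =
      (Fintype.card ι - 1).choose #U * p := fun j => by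
    have hpre : {ω | #(belowSet (fun l => Z l ω) j) = #U} =
        (fun ω => belowSet (fun l => Z l ω) j) ⁻¹' ((Finset.univ.erase j).powersetCard #U) := by
      ext ω
      simp [Finset.mem_powersetCard, Finset.subset_erase]
    rw [hpre, ← sum_measureReal_preimage_singleton _ fun _ _ =>
      measurableSet_setOf_belowSet hZ j (· = _)]
    calc ∑ V ∈ (Finset.univ.erase j).powersetCard #U, P.real {ω | belowSet (fun l => Z l ω) j = V}
        = ∑ _ ∈ (Finset.univ.erase j).powersetCard #U, p := Finset.sum_congr rfl fun _ hV => by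
          rw [Finset.mem_powersetCard, Finset.subset_erase] at hV
          exact hexch.measureReal_belowSet_eq_of_card_eq hZ hV.1.2 hi hV.2
      _ = (Fintype.card ι - 1).choose #U * p := by simp
  have htotal : ∑ j, P.real {ω | #(belowSet (fun l => Z l ω) j) = #U} = 1 := by
    simpa using sum_measureReal_inter_of_ae_existsUnique
      (fun j => measurableSet_setOf_belowSet hZ j (#· = #U))
      (hdist.mono fun ω hω => existsUnique_card_belowSet_eq hω hU) Set.univ
  rw [Beta_natCast_add_one_natCast_sub hU]
  refine eq_inv_of_mul_eq_one_right ?_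
  simpa [hrank, mul_assoc] using htotal

end Exchangeable

end Exchangeable

section References

variable {Ω ι κ : Type*} [MeasurableSpace Ω] {P : Measure Ω} [Fintype ι] [Fintype κ]

lemma measurable_countLeKthSmallest {k : ℕ} (hk : 1 ≤ k) (hkι : k ≤ Fintype.card ι)
    {Z : ι ⊕ κ → Ω → ℝ} (hZ : ∀ i, Measurable (Z i)) :
    Measurable fun ω => countLeKthSmallest k fun i => Z i ω := by
  simp only [countLeKthSmallest_eq_card_filter hk hkι, Finset.card_filter]
  exact Finset.measurable_fun_sum _ fun j _ => Measurable.ite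
    (measurableSet_setOf_belowSet hZ (Sum.inr j) (#·.toLeft < k)) measurable_const measurable_const

namespace Exchangeable

lemma measureReal_card_toLeft_card_toRight_belowSet_eq [IsProbabilityMeasure P] {α : Type*}
    [MeasurableSpace α] [LinearOrder α] [TopologicalSpace α] [OrderClosedTopology α]
    [SecondCountableTopology α] [OpensMeasurableSpace α] {Z : ι ⊕ κ → Ω → α}
    (hexch : Exchangeable Z P) (hZ : ∀ i, Measurable (Z i))
    (hdist : ∀ᵐ ω ∂P, Function.Injective fun i => Z i ω) (i : ι) (u m : ℕ) :
    P.real {ω | #(belowSet (fun l => Z l ω) (Sum.inl i)).toLeft = u ∧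
        #(belowSet (fun l => Z l ω) (Sum.inl i)).toRight = m} =
      (Fintype.card ι - 1).choose u * (Fintype.card κ).choose m *
        Beta ((u + m : ℕ) + 1) ((Fintype.card ι + Fintype.card κ : ℕ) - (u + m : ℕ)) := by
  classical
  let F : Finset (Finset ι × Finset κ) :=
    (Finset.univ.erase i).powersetCard u ×ˢ (Finset.univ : Finset κ).powersetCard m
  have hpre : {ω | #(belowSet (fun l => Z l ω) (Sum.inl i)).toLeft = u ∧
        #(belowSet (fun l => Z l ω) (Sum.inl i)).toRight = m} =
      (fun ω => ((belowSet (fun l => Z l ω) (Sum.inl i)).toLeft,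
        (belowSet (fun l => Z l ω) (Sum.inl i)).toRight)) ⁻¹' F := by
    ext ω
    simp [F, Finset.mem_powersetCard, Finset.subset_erase]
  have hterm : ∀ V ∈ F, P.real {ω | ((belowSet (fun l => Z l ω) (Sum.inl i)).toLeft,
        (belowSet (fun l => Z l ω) (Sum.inl i)).toRight) = V} =
      Beta ((u + m : ℕ) + 1) ((Fintype.card ι + Fintype.card κ : ℕ) - (u + m : ℕ)) := by
    rintro ⟨S, T⟩ hST
    simp only [F, Finset.mem_product, Finset.mem_powersetCard, Finset.subset_erase] at hST
    obtain ⟨⟨⟨-, hiS⟩, rfl⟩, -, rfl⟩ := hST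
    have hnotMem : Sum.inl i ∉ S.disjSum T := by simpa using hiS
    simpa [Finset.eq_disjSum_iff] using hexch.measureReal_belowSet_eq hZ hdist hnotMem
  rw [hpre, ← sum_measureReal_preimage_singleton F fun V _ =>
    measurableSet_setOf_belowSet hZ (Sum.inl i) fun U => (U.toLeft, U.toRight) = V]
  exact (Finset.sum_congr rfl hterm).trans (by simp [F])

variable [IsProbabilityMeasure P] {Z : ι ⊕ κ → Ω → ℝ}

lemma measureReal_countLeKthSmallest_eq (hexch : Exchangeable Z P) (hZ : ∀ i, Measurable (Z i))
    (hdist : ∀ᵐ ω ∂P, Function.Injective fun i => Z i ω) {k : ℕ} (hk : 1 ≤ k)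
    (hkι : k ≤ Fintype.card ι) (m : ℕ) :
    P.real {ω | countLeKthSmallest k (fun i => Z i ω) = m} =
      (Fintype.card κ).choose m *
        Beta ((k : ℝ) + m) ((Fintype.card κ : ℝ) - m + (Fintype.card ι + 1) - k) /
          Beta (k : ℝ) ((Fintype.card ι : ℝ) + 1 - k) := by
  obtain ⟨u, rfl⟩ := Nat.exists_eq_add_of_le' hk
  have hunique : ∀ᵐ ω ∂P, ∃! i, #(belowSet (fun l => Z l ω) (Sum.inl i)).toLeft = u := by
    filter_upwards [hdist] with ω hω
    simp only [toLeft_belowSet_inl]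
    exact existsUnique_card_belowSet_eq (hω.comp Sum.inl_injective) hkι
  have hinter : ∀ i, P.real ({ω | countLeKthSmallest (u + 1) (fun i => Z i ω) = m} ∩
        {ω | #(belowSet (fun l => Z l ω) (Sum.inl i)).toLeft = u}) =
      P.real {ω | #(belowSet (fun l => Z l ω) (Sum.inl i)).toLeft = u ∧
        #(belowSet (fun l => Z l ω) (Sum.inl i)).toRight = m} := fun i => by
    refine measureReal_congr ?_
    filter_upwards [hdist] with ω hω
    refine propext (and_comm.trans (and_congr_right fun hu => ?_))
    rw [Set.mem_ofPred_eq, toLeft_belowSet_inl] at hu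
    exact (countLeKthSmallest_eq_card_toRight hω hu).congr_left
  have hBeta := Beta_natCast_add_one_natCast_sub hkι
  rw [← sum_measureReal_inter_of_ae_existsUnique
    (fun i => measurableSet_setOf_belowSet hZ (Sum.inl i) (#·.toLeft = u)) hunique]
  simp only [hinter, hexch.measureReal_card_toLeft_card_toRight_belowSet_eq hZ hdist,
    Finset.sum_const, Finset.card_univ, nsmul_eq_mul]
  push_cast
  rw [add_sub_add_right_eq_sub, hBeta, div_inv_eq_mul]
  ring_nf

lemma integral_comp_countLeKthSmallest {E : Type*} [NormedAddCommGroup E] [NormedSpace ℝ E]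
    [CompleteSpace E] (hexch : Exchangeable Z P) (hZ : ∀ i, Measurable (Z i))
    (hdist : ∀ᵐ ω ∂P, Function.Injective fun i => Z i ω) {k : ℕ} (hk : 1 ≤ k)
    (hkι : k ≤ Fintype.card ι) (g : ℕ → E) :
    ∫ ω, g (countLeKthSmallest k fun i => Z i ω) ∂P =
      ∑ j ∈ Finset.range (Fintype.card κ + 1),
        ((Fintype.card κ).choose j *
          Beta ((k : ℝ) + j) ((Fintype.card κ : ℝ) - j + (Fintype.card ι + 1) - k) /
            Beta (k : ℝ) ((Fintype.card ι : ℝ) + 1 - k)) • g j := by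
  rw [integral_comp_eq_sum_range (measurable_countLeKthSmallest hk hkι hZ)
    (fun _ => countLeKthSmallest_le_card k _)]
  simp only [hexch.measureReal_countLeKthSmallest_eq hZ hdist hk hkι]

end Exchangeable

end References

theorem expected_clipped_count_one_dim_general
    {Ω ι κ : Type*} [MeasurableSpace Ω] {P : Measure Ω} [IsProbabilityMeasure P]
    [Fintype ι] [Fintype κ] {k : ℕ} (hk : 1 ≤ k) (hkι : k ≤ Fintype.card ι)
    {Z : ι ⊕ κ → Ω → ℝ} (hZ : ∀ i, Measurable (Z i)) (hexch : Exchangeable Z P)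
    (hdist : ∀ᵐ ω ∂P, Function.Injective fun i => Z i ω) :
    ∫ ω, min ((countLeKthSmallest k (fun i => Z i ω) : ℝ) / k) 1 ∂P =
      ∑ j ∈ Finset.Icc 1 (Fintype.card κ),
        min ((j : ℝ) / k) 1 * ((Fintype.card κ).choose j : ℝ) *
          Beta ((k : ℝ) + j) ((Fintype.card κ : ℝ) - j + (Fintype.card ι + 1) - k) /
            Beta (k : ℝ) ((Fintype.card ι : ℝ) + 1 - k) := by
  rw [hexch.integral_comp_countLeKthSmallest hZ hdist hk hkι fun j => min ((j : ℝ) / k) 1,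
    Finset.range_eq_Ico, Finset.sum_eq_sum_Ico_succ_bot (Nat.succ_pos _)]
  have hzero : min (((0 : ℕ) : ℝ) / k) 1 = 0 := by simp
  rw [hzero, smul_zero, zero_add, zero_add, ← Finset.Ico_add_one_right_eq_Icc]
  refine Finset.sum_congr rfl fun j _ => ?_
  rw [smul_eq_mul]
  ring

/-- One-dimensional reduction of Lemma 1 of the paper: with `Z_1, …, Z_{N-1+M}` i.i.d.
from an atomless real law, `R` the `k`-th smallest of `Z_1, …, Z_{N-1}` and
`C = #{j ≤ M : Z_{N-1+j} ≤ R}`, the expectation of `min(C/k, 1)` is the stated sum. -/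
theorem expected_clipped_count_one_dim
    {Ω : Type*} [MeasurableSpace Ω] (P : Measure Ω) [IsProbabilityMeasure P]
    (μ : Measure ℝ) [IsProbabilityMeasure μ] [NullSingletonClass μ]
    (N M k : ℕ) (hk1 : 1 ≤ k) (hkN : k ≤ N - 1) (hkM : k ≤ M)
    (Z : Fin (N - 1 + M) → Ω → ℝ)
    (hmeas : ∀ i, Measurable (Z i))
    (hlaw : ∀ i, P.map (Z i) = μ)
    (hindep : iIndepFun Z P) :
    ∫ ω, min
        (((Finset.univ.filter (fun j : Fin M =>
            Z (Fin.natAdd (N - 1) j) ω ≤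
              kthSmallest
                ((List.ofFn (fun i : Fin (N - 1) => Z (Fin.castAdd M i) ω)) : Multiset ℝ)
                k)).card : ℝ) / k) 1 ∂P
      = ∑ j ∈ Finset.Icc 1 M,
          min ((j : ℝ) / k) 1 * (M.choose j : ℝ) *
            Beta ((k : ℝ) + j) ((M : ℝ) - j + N - k) / Beta (k : ℝ) ((N : ℝ) - k) := by
  have hN : (N : ℝ) = (N - 1 : ℕ) + 1 := by
    rw [← Nat.cast_add_one, Nat.sub_add_cancel (hk1.trans (hkN.trans (Nat.sub_le N 1)))]
  have hatom : ∀ s, NullSingletonClass (P.map (Z (finSumFinEquiv s))) := fun s =>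
    hlaw _ ▸ inferInstance
  have hindep' := hindep.precomp (finSumFinEquiv (m := N - 1) (n := M)).injective
  have hmeas' : ∀ s, Measurable (Z (finSumFinEquiv s)) := fun s => hmeas _
  simpa [countLeKthSmallest, Fin.univ_val_map, Function.comp_def, hN] using
    expected_clipped_count_one_dim_general hk1 (by simpa using hkN) hmeas'
      (exchangeable_of_iIndepFun hmeas' (fun s => hlaw _) hindep')
      (ae_injective_of_iIndepFun hmeas' hindep')
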